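/- For every k : ℕ there exists a finite set F of Pinwheel Scheduling instances with k tasks such that every member of F is schedulable and, for every instance b with k tasks, b is schedulable if and only if there exists a ∈ F with a i ≤ b i for all i. -/

import Mathlib

/-!
Lengthening the windows keeps a schedule valid, so the schedulable instances form an upward closed
subset of `ℕ ^ k`. By Dickson's lemma the pointwise order on `ℕ ^ k` is a well-quasi-order, and in a
well-quasi-order every set is dominated from below by finitely many of its elements.
-/

/-- A schedule `S` is valid for the Pinwheel Scheduling instance `a` if every task `i`
is executed at least once in every window of `a i` consecutive days. -/
def IsValidSchedule {k : ℕ} (a : Fin k → ℕ) (S : ℕ → Option (Fin k)) : Prop :=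
  ∀ i : Fin k, ∀ t : ℕ, ∃ t', t ≤ t' ∧ t' < t + a i ∧ S t' = some i

/-- A Pinwheel Scheduling instance is schedulable if some valid schedule exists. -/
def Schedulable {k : ℕ} (a : Fin k → ℕ) : Prop :=
  ∃ S : ℕ → Option (Fin k), IsValidSchedule a S

theorem exists_finset_forall_exists_rel_of_wellQuasiOrdered {α : Type*} {r : α → α → Prop}
    (hr : WellQuasiOrdered r) (P : α → Prop) :
    ∃ F : Finset α, (∀ a ∈ F, P a) ∧ ∀ b, P b → ∃ a ∈ F, r a b := by
  by_contra! hF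
  -- Picking, over and over, an element of `P` above none of the earlier picks gives a bad sequence.
  obtain ⟨f, -, hbad⟩ := exists_seq_of_forall_finset_exists P (fun a b ↦ ¬ r a b) hF
  obtain ⟨m, n, hmn, hr_mn⟩ := hr f
  exact hbad m n hmn hr_mn

theorem IsValidSchedule.mono {k : ℕ} {a b : Fin k → ℕ} {S : ℕ → Option (Fin k)}
    (hS : IsValidSchedule a S) (hab : a ≤ b) : IsValidSchedule b S := by
  intro i t
  obtain ⟨t', ht, ht_lt, ht_task⟩ := hS i t
  exact ⟨t', ht, ht_lt.trans_le (Nat.add_le_add_left (hab i) t), ht_task⟩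

theorem Schedulable.mono {k : ℕ} {a b : Fin k → ℕ} (ha : Schedulable a) (hab : a ≤ b) :
    Schedulable b :=
  ha.imp fun _ hS ↦ hS.mono hab

theorem finite_pareto_surface (k : ℕ) :
    ∃ F : Finset (Fin k → ℕ),
      (∀ a ∈ F, Schedulable a) ∧
      (∀ b : Fin k → ℕ, Schedulable b ↔ ∃ a ∈ F, ∀ i, a i ≤ b i) := by
  have dickson : WellQuasiOrdered fun a b : Fin k → ℕ ↦ a ≤ b := wellQuasiOrdered_le
  obtain ⟨F, hF, hdom⟩ := exists_finset_forall_exists_rel_of_wellQuasiOrdered dickson Schedulable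
  exact ⟨F, hF, fun b ↦ ⟨hdom b, fun ⟨a, ha, hab⟩ ↦ (hF a ha).mono hab⟩⟩
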